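/- Let G be a DAG containing no active cycle, let X, Y, Z ⊆ V be disjoint with TRAILS(X,Y,Z) ≠ ∅, and let T be a minimal element of TRAILS(X,Y,Z) with respect to <_TRAIL, with converging nodes c_1, …, c_C. If for some i the arc c_i → c_{i+1} belongs to E and c_{i+1} ∈ Z, then c_i ∈ Z. -/

import Mathlib

open scoped Classical

/-- `E` is the arc relation of a (finite) directed acyclic graph: there are no
directed cycles (hence also no loops and no pairs of opposite arcs). -/
def IsDAG {V : Type*} (E : V → V → Prop) : Prop :=
  ∀ v : V, ¬ Relation.TransGen E v v

/-- `d` is a descendant of `v`: there is a (nonempty) directed path from `v` to `d`. -/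
def Desc {V : Type*} (E : V → V → Prop) (v d : V) : Prop :=
  Relation.TransGen E v d

/-- A trail: a sequence of `len + 1` pairwise distinct nodes
`f 0, f 1, …, f len`, consecutive ones joined by an arc of `E`
in one of the two possible directions.  Its length is `len`. -/
structure Trail (V : Type*) (E : V → V → Prop) where
  len : ℕ
  f : ℕ → V
  arcs : ∀ i, i < len → E (f i) (f (i + 1)) ∨ E (f (i + 1)) (f i)
  inj : ∀ i, i ≤ len → ∀ j, j ≤ len → f i = f j → i = j

namespace Trail

variable {V : Type*} {E : V → V → Prop}

/-- The trail has a converging connection at the interior index `i`: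
`f (i-1) → f i ← f (i+1)`. -/
def ConvAt (T : Trail V E) (i : ℕ) : Prop :=
  0 < i ∧ i < T.len ∧ E (T.f (i - 1)) (T.f i) ∧ E (T.f (i + 1)) (T.f i)

/-- The trail is activated by `Z`: every interior converging node is in `Z` or has a
descendant in `Z`, and every interior non-converging node is not in `Z`. -/
def ActivatedBy (T : Trail V E) (Z : Set V) : Prop :=
  ∀ i, 0 < i → i < T.len →
    (T.ConvAt i → (T.f i ∈ Z ∨ ∃ d ∈ Z, Desc E (T.f i) d)) ∧
    (¬ T.ConvAt i → T.f i ∉ Z)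

/-- The trail has a chord: an arc of `E` between two non-consecutive nodes. -/
def HasChord (T : Trail V E) : Prop :=
  ∃ i j, i + 1 < j ∧ j ≤ T.len ∧ (E (T.f i) (T.f j) ∨ E (T.f j) (T.f i))

end Trail

/-- `E` contains an active cycle: a closed trail
`v ← x 0 ⇄ x 1 ⇄ ⋯ ⇄ x n ⇄ x (n+1) → v` (so `w = x 0` and `z = x (n+1)` are
distinct parents of `v`), with `n ≥ 1`, such that the trail
`x 0 ⇄ ⋯ ⇄ x (n+1)` has no converging connection and the closed trail has no chords. -/
def HasActiveCycle {V : Type*} (E : V → V → Prop) : Prop :=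
  ∃ (v : V) (n : ℕ) (x : ℕ → V),
    1 ≤ n ∧
    E (x 0) v ∧ E (x (n + 1)) v ∧
    (∀ i, i ≤ n + 1 → x i ≠ v) ∧
    (∀ i, i ≤ n + 1 → ∀ j, j ≤ n + 1 → x i = x j → i = j) ∧
    (∀ i, i < n + 1 → E (x i) (x (i + 1)) ∨ E (x (i + 1)) (x i)) ∧
    (∀ i, 0 < i → i < n + 1 → ¬ (E (x (i - 1)) (x i) ∧ E (x (i + 1)) (x i))) ∧
    (∀ i j, i + 1 < j → j ≤ n + 1 → ¬ (i = 0 ∧ j = n + 1) →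
      ¬ E (x i) (x j) ∧ ¬ E (x j) (x i)) ∧
    (∀ i, 1 ≤ i → i ≤ n → ¬ E v (x i) ∧ ¬ E (x i) v)

/-- A descendant path from `c` to `Z` with `n` intermediate nodes:
`c = d 0 → d 1 → ⋯ → d n → d (n+1) ∈ Z`, with `d j ∉ Z` for all `j ≤ n`. -/
def IsDescPath {V : Type*} (E : V → V → Prop) (Z : Set V) (c : V) (d : ℕ → V) (n : ℕ) :
    Prop :=
  d 0 = c ∧ d (n + 1) ∈ Z ∧ (∀ j, j ≤ n → d j ∉ Z) ∧ (∀ j, j ≤ n → E (d j) (d (j + 1)))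

/-- `n_Z(c)`: the least number of intermediate nodes of a descendant path from `c` to `Z`
(this is `0` when `c ∈ Z`, since then no descendant path exists and `sInf ∅ = 0`). -/
noncomputable def nZ {V : Type*} (E : V → V → Prop) (Z : Set V) (c : V) : ℕ :=
  sInf {n | ∃ d : ℕ → V, IsDescPath E Z c d n}

namespace Trail

variable {V : Type*} {E : V → V → Prop}

/-- The set of (interior) indices of `T` carrying a converging connection. -/
noncomputable def convIdx (T : Trail V E) : Finset ℕ :=
  (Finset.Ioo 0 T.len).filter fun i => T.ConvAt i

/-- The weight vector `(|{c₁,…,c_C} \ Z|, C, Σᵢ n_Z(i), Σᵢ n_t(i))` of a trail,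
whose lexicographic comparison induces the order `<_TRAIL`.  (The total length
of the subtrails, `Σᵢ n_t(i)`, equals `len - 1 - C`.) -/
noncomputable def weight (T : Trail V E) (Z : Set V) : ℕ × ℕ × ℕ × ℕ :=
  ((T.convIdx.filter fun i => T.f i ∉ Z).card,
   T.convIdx.card,
   ∑ i ∈ T.convIdx, nZ E Z (T.f i),
   T.len - 1 - T.convIdx.card)

end Trail

/-- Strict lexicographic order on `ℕ × ℕ × ℕ × ℕ`. -/
def LexLt4 (a b : ℕ × ℕ × ℕ × ℕ) : Prop :=
  a.1 < b.1 ∨ (a.1 = b.1 ∧ (a.2.1 < b.2.1 ∨ (a.2.1 = b.2.1 ∧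
    (a.2.2.1 < b.2.2.1 ∨ (a.2.2.1 = b.2.2.1 ∧ a.2.2.2 < b.2.2.2)))))

/-- `T ∈ TRAILS(X, Y, Z)`: `T` is a trail from a node of `X` to a node of `Y`
activated by `Z`. -/
def InTRAILS {V : Type*} {E : V → V → Prop} (T : Trail V E) (X Y Z : Set V) : Prop :=
  T.f 0 ∈ X ∧ T.f T.len ∈ Y ∧ T.ActivatedBy Z

/-- `T` is a minimal element of `TRAILS(X, Y, Z)` with respect to `<_TRAIL`. -/
def MinimalTrail {V : Type*} {E : V → V → Prop} (T : Trail V E) (X Y Z : Set V) : Prop :=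
  InTRAILS T X Y Z ∧
    ∀ T' : Trail V E, InTRAILS T' X Y Z → ¬ LexLt4 (T'.weight Z) (T.weight Z)

namespace Trail

variable {V : Type*} {E : V → V → Prop}

/-- The trail obtained from `T` by replacing the part strictly between the indices
`a` and `b` with an arc `f a → f b`. -/
def shortcut (T : Trail V E) (a b : ℕ) (hab : a < b) (hb : b ≤ T.len)
    (hE : E (T.f a) (T.f b)) : Trail V E where
  len := T.len - (b - a - 1)
  f i := T.f (if i ≤ a then i else i + (b - a - 1))
  arcs i hi := by
    rcases lt_trichotomy i a with h | rfl | h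
    · rw [if_pos h.le, if_pos (by omega)]
      exact T.arcs i (by omega)
    · rw [if_pos le_rfl, if_neg (by omega), show i + 1 + (b - i - 1) = b by omega]
      exact Or.inl hE
    · rw [if_neg (by omega), if_neg (by omega), Nat.add_right_comm]
      exact T.arcs _ (by omega)
  inj i hi j hj h := by
    have := T.inj _ (by split_ifs <;> omega) _ (by split_ifs <;> omega) h
    split_ifs at this <;> omega

variable {T : Trail V E} {a b : ℕ} {hab : a < b} {hb : b ≤ T.len} {hE : E (T.f a) (T.f b)}

theorem not_convAt_shortcut_left (hdag : IsDAG E) : ¬ (T.shortcut a b hab hb hE).ConvAt a := by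
  rintro ⟨-, -, -, h⟩
  simp only [shortcut, le_refl, if_true] at h
  rw [if_neg (by omega), show a + 1 + (b - a - 1) = b by omega] at h
  exact hdag _ (.head hE (.single h))

theorem convAt_shortcut_iff (hconv : T.ConvAt b) {i : ℕ} (hi : i ≠ a) :
    (T.shortcut a b hab hb hE).ConvAt i ↔
      T.ConvAt (if i ≤ a then i else i + (b - a - 1)) := by
  rcases lt_or_gt_of_ne hi with h | h
  · simp only [ConvAt, shortcut, if_pos h.le, if_pos (show i - 1 ≤ a by omega),
      if_pos (show i + 1 ≤ a by omega)]
    refine and_congr_right fun _ => and_congr_left fun _ => ?_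
    omega
  · obtain rfl | h' := eq_or_lt_of_le (Nat.succ_le_of_lt h)
    · have e : a.succ + (b - a - 1) = b := by omega
      rw [if_neg (by omega), e]
      refine iff_of_true ⟨by omega, ?_, ?_, ?_⟩ hconv
      · have := hconv.2.1
        simp only [shortcut]
        omega
      · simpa [shortcut, e] using hE
      · simp only [shortcut]
        rw [if_neg (by omega), if_neg (by omega), Nat.add_right_comm, e]
        exact hconv.2.2.2
    · simp only [ConvAt, shortcut, if_neg (show ¬ i ≤ a by omega),
        if_neg (show ¬ i - 1 ≤ a by omega), if_neg (show ¬ i + 1 ≤ a by omega)]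
      rw [show i - 1 + (b - a - 1) = i + (b - a - 1) - 1 by omega,
        Nat.add_right_comm i 1 (b - a - 1)]
      refine and_congr (by omega) (and_congr_left fun _ => ?_)
      omega

theorem activatedBy_shortcut {Z : Set V} (hdag : IsDAG E) (hact : T.ActivatedBy Z)
    (hconv : T.ConvAt b) (ha : T.f a ∉ Z) : (T.shortcut a b hab hb hE).ActivatedBy Z := by
  intro i hi hlen
  by_cases hia : i = a
  · subst hia
    exact ⟨fun h => absurd h (not_convAt_shortcut_left hdag), fun _ => by simpa [shortcut] using ha⟩
  · rw [convAt_shortcut_iff hconv hia]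
    simp only [shortcut] at hlen
    exact hact _ (by split_ifs <;> omega) (by split_ifs <;> omega)

theorem mem_convIdx {T : Trail V E} {i : ℕ} : i ∈ T.convIdx ↔ T.ConvAt i := by
  simp only [convIdx, Finset.mem_filter, Finset.mem_Ioo, and_iff_right_iff_imp]
  exact fun h => ⟨h.1, h.2.1⟩

theorem card_convIdx_notMem_shortcut_lt {Z : Set V} (hdag : IsDAG E) (hconva : T.ConvAt a)
    (hconvb : T.ConvAt b) (ha : T.f a ∉ Z) :
    ((T.shortcut a b hab hb hE).convIdx.filter
        fun i => (T.shortcut a b hab hb hE).f i ∉ Z).card <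
      (T.convIdx.filter fun i => T.f i ∉ Z).card := by
  have hmem : a ∈ T.convIdx.filter fun i => T.f i ∉ Z :=
    Finset.mem_filter.2 ⟨mem_convIdx.2 hconva, ha⟩
  refine lt_of_le_of_lt ?_ (Finset.card_erase_lt_of_mem hmem)
  refine Finset.card_le_card_of_injOn (fun i => if i ≤ a then i else i + (b - a - 1)) ?_ ?_
  · intro i hi
    obtain ⟨hi, hiZ⟩ := Finset.mem_filter.1 hi
    rw [mem_convIdx] at hi
    have hia : i ≠ a := by
      rintro rfl
      exact not_convAt_shortcut_left hdag hi
    refine Finset.mem_erase.2 ⟨?_, Finset.mem_filter.2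
      ⟨mem_convIdx.2 ((convAt_shortcut_iff hconvb hia).1 hi), hiZ⟩⟩
    dsimp only
    split_ifs <;> omega
  · intro i _ j _ h
    dsimp only at h
    split_ifs at h <;> omega

end Trail

/-- For a minimal trail `T` of `TRAILS(X,Y,Z)`: if `cᵢ → cᵢ₊₁ ∈ E`
for consecutive converging nodes and `cᵢ₊₁ ∈ Z`, then `cᵢ ∈ Z`. -/
theorem minimal_trail_arc_forward_in_Z
    {V : Type*} [Fintype V] (E : V → V → Prop) (hdag : IsDAG E)
    (hnac : ¬ HasActiveCycle E) (X Y Z : Set V)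
    (hXY : Disjoint X Y) (hXZ : Disjoint X Z) (hYZ : Disjoint Y Z)
    (hne : ∃ T₀ : Trail V E, InTRAILS T₀ X Y Z)
    (T : Trail V E) (hT : MinimalTrail T X Y Z) :
    ∀ a b, T.ConvAt a → T.ConvAt b → a < b →
      (∀ i, a < i → i < b → ¬ T.ConvAt i) →
      E (T.f a) (T.f b) → T.f b ∈ Z → T.f a ∈ Z := by
  intro a b hca hcb hab _ hE _
  by_contra haZ
  refine hT.2 (T.shortcut a b hab hcb.2.1.le hE)
    ⟨?_, ?_, Trail.activatedBy_shortcut hdag hT.1.2.2 hcb haZ⟩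
    (Or.inl (Trail.card_convIdx_notMem_shortcut_lt hdag hca hcb haZ))
  · simpa [Trail.shortcut] using hT.1.1
  · have := hcb.2.1
    simp only [Trail.shortcut]
    rw [if_neg (by omega), Nat.sub_add_cancel (by omega)]
    exact hT.1.2.1
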